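/- For coprime positive integers p, q with q ≡ 0 (mod 4), the classical Gauss sum g₁(p,q) = Σ_{h mod q} e^{2πi p h²/q} equals (1+i)·ε_p^{-1}·(q/p)·√q, where (q/p) is the Jacobi symbol and ε_p = 1 if p ≡ 1 (mod 4) and ε_p = i if p ≡ 3 (mod 4). -/

import Mathlib

open Complex Real

/-!
Near a rational point `2a/N` of the real axis, `√(-iτ) θ(2a/N + τ)` tends to the mean of
`x ↦ e(a x² / N)` over the residues mod `N`. Since `θ` is modular under `τ ↦ -1/τ`, the limits at
`2a/b` and at `-b/(2a)` are proportional, which is the Landsberg–Schaar reciprocity between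
`G(a; b)` and `G(-b; 4a)`; the case `a = 1` evaluates every `G(1; N)`.

The Gauss sum `G(p; q)` and its claimed value depend only on `p` modulo `4q`, so by Dirichlet's
theorem `p` may be taken to be an odd prime `ℓ`. Then `G(ℓ; q) G(q; ℓ) = G(1; qℓ)`, and
`G(q; ℓ) = (q/ℓ) G(1; ℓ)` because over a finite field `∑ ψ(x²)` is the Gauss sum of the quadratic
character; both values at `1` are known.
-/

/-- The quadratic Gauss sum `∑ x mod N, e(a x² / N)`, with the coefficient `a` taken modulo `N`. -/
noncomputable def quadraticGaussSum {N : ℕ} [NeZero N] (a : ZMod N) : ℂ :=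
  ∑ x : ZMod N, ZMod.stdAddChar (a * x ^ 2)

lemma sum_range_eq_sum_zmod_val {M : Type*} [AddCommMonoid M] (N : ℕ) [NeZero N] (f : ℕ → M) :
    ∑ h ∈ Finset.range N, f h = ∑ x : ZMod N, f x.val := by
  obtain ⟨n, rfl⟩ := Nat.exists_eq_succ_of_ne_zero (NeZero.ne N)
  exact (Fin.sum_univ_eq_sum_range f (n + 1)).symm

lemma sum_range_exp_eq_quadraticGaussSum (p q : ℕ) [NeZero q] :
    ∑ h ∈ Finset.range q, cexp (2 * π * I * p * h ^ 2 / q) = quadraticGaussSum (p : ZMod q) := by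
  rw [sum_range_eq_sum_zmod_val q fun h : ℕ ↦ cexp (2 * π * I * p * h ^ 2 / q), quadraticGaussSum]
  refine Finset.sum_congr rfl fun x _ ↦ ?_
  have hchar := ZMod.stdAddChar_coe (N := q) (p * x.val ^ 2)
  push_cast [ZMod.natCast_zmod_val] at hchar
  rw [hchar]
  ring_nf

lemma mul_cpow_of_arg_add_arg_mem {x y : ℂ} (h : arg x + arg y ∈ Set.Ioc (-π) π) (s : ℂ) :
    (x * y) ^ s = x ^ s * y ^ s := by
  obtain rfl | hs := eq_or_ne s 0
  · simp
  obtain rfl | hx := eq_or_ne x 0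
  · simp [hs]
  obtain rfl | hy := eq_or_ne y 0
  · simp [hs]
  rw [cpow_def_of_ne_zero (mul_ne_zero hx hy), cpow_def_of_ne_zero hx, cpow_def_of_ne_zero hy,
    (log_mul_eq_add_log_iff hx hy).mpr h, add_mul, Complex.exp_add]

lemma I_mul_ofReal_cpow_half {x : ℝ} (hx : 0 < x) :
    (I * x) ^ (1 / 2 : ℂ) = (1 + I) * √(x / 2) := by
  have hsq : (I * x : ℂ) = ((1 + I) * √(x / 2)) ^ 2 := by
    rw [mul_pow, ← ofReal_pow, Real.sq_sqrt (by positivity)]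
    push_cast
    linear_combination (-x / 2 : ℂ) * I_sq
  rw [hsq, one_div, sq_cpow_two_inv (by simpa using hx)]

section Reciprocity

open Filter Topology

variable {ι : Type*} {l : Filter ι}

lemma tendsto_jacobiTheta₂_of_tendsto_im (z : ℂ) {τ : ι → ℂ}
    (hτ : Tendsto (fun i ↦ (τ i).im) l atTop) :
    Tendsto (fun i ↦ jacobiTheta₂ z (τ i)) l (𝓝 1) := by
  have hsum : (1 : ℂ) = ∑' n : ℤ, if n = 0 then 1 else 0 := by simp
  have hbound : Summable fun n : ℤ ↦ rexp (-π * (1 * n ^ 2 - 2 * |z.im| * |n|)) := by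
    simpa using summable_pow_mul_jacobiTheta₂_term_bound |z.im| one_pos 0
  rw [hsum]
  refine tendsto_tsum_of_dominated_convergence hbound (fun n ↦ ?_) ?_
  · obtain rfl | hn := eq_or_ne n 0
    · simp [jacobiTheta₂_term, tendsto_const_nhds]
    · rw [if_neg hn, tendsto_zero_iff_norm_tendsto_zero]
      simp only [norm_jacobiTheta₂_term]
      have hcoeff : -π * (n : ℝ) ^ 2 < 0 := by rw [neg_mul, neg_lt_zero]; positivity
      exact Real.tendsto_exp_atBot.comp
        (tendsto_atBot_add_const_right _ _ (hτ.const_mul_atTop_of_neg hcoeff))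
  · filter_upwards [hτ.eventually_ge_atTop 1] with i hi n
    exact norm_jacobiTheta₂_term_le one_pos le_rfl hi n

lemma cpow_half_mul_tsum_exp_add_sq (z : ℂ) {τ : ℂ} (hτ : τ ≠ 0) :
    (-I * τ) ^ (1 / 2 : ℂ) * ∑' k : ℤ, cexp (π * I * (k + z) ^ 2 * τ) =
      jacobiTheta₂ z (-1 / τ) := by
  have hroot : (-I * τ) ^ (1 / 2 : ℂ) ≠ 0 := by simp [cpow_eq_zero_iff, hτ]
  have hsum : ∑' k : ℤ, cexp (π * I * (k + z) ^ 2 * τ) =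
      cexp (π * I * z ^ 2 * τ) * jacobiTheta₂ (z * τ) τ := by
    rw [jacobiTheta₂, ← tsum_mul_left]
    refine tsum_congr fun k ↦ ?_
    rw [jacobiTheta₂_term, ← Complex.exp_add]
    ring_nf
  have hexp : cexp (π * I * z ^ 2 * τ) * cexp (-π * I * (z * τ) ^ 2 / τ) = 1 := by
    rw [← Complex.exp_add, Complex.exp_eq_one_iff]
    exact ⟨0, by field_simp; simp⟩
  rw [hsum, jacobiTheta₂_functional_equation, mul_div_cancel_right₀ z hτ]
  linear_combination jacobiTheta₂ z (-1 / τ) * hexp +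
    jacobiTheta₂ z (-1 / τ) * cexp (π * I * z ^ 2 * τ) * cexp (-π * I * (z * τ) ^ 2 / τ) *
      mul_one_div_cancel hroot

lemma tsum_int_eq_sum_zmod_tsum {R : Type*} [AddCommGroup R] [UniformSpace R]
    [IsUniformAddGroup R] [CompleteSpace R] [T0Space R] {f : ℤ → R} (hf : Summable f) (N : ℕ)
    [NeZero N] :
    ∑' n, f n = ∑ x : ZMod N, ∑' k : ℤ, f (k * N + x.val) := by
  let e : Fin N × ℤ ≃ ℤ := (Equiv.prodComm _ _).trans (Int.divModEquiv N).symm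
  have hfe : Summable fun y ↦ f (e y) := e.summable_iff.mpr hf
  rw [← e.tsum_eq f, hfe.tsum_prod, tsum_fintype,
    ← sum_range_eq_sum_zmod_val N fun h ↦ ∑' k : ℤ, f (k * N + h), ← Fin.sum_univ_eq_sum_range]
  rfl

lemma summable_zmod_mul_exp {N : ℕ} [NeZero N] (c : ZMod N → ℂ) {τ : ℂ} (hτ : 0 < τ.im) :
    Summable fun n : ℤ ↦ c n * cexp (π * I * n ^ 2 * τ) := by
  have hexp : Summable fun n : ℤ ↦ cexp (π * I * n ^ 2 * τ) := by
    simpa [jacobiTheta₂_term] using (summable_jacobiTheta₂_term_iff 0 τ).mpr hτ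
  refine .of_norm_bounded (hexp.norm.mul_left ‖c‖) fun n ↦ ?_
  rw [norm_mul]
  gcongr
  exact norm_le_pi_norm c n

lemma cpow_half_mul_tsum_zmod {N : ℕ} [NeZero N] (c : ZMod N → ℂ) {τ : ℂ} (hτ : 0 < τ.im) :
    (-I * τ) ^ (1 / 2 : ℂ) * ∑' n : ℤ, c n * cexp (π * I * n ^ 2 * τ) =
      1 / N * ∑ x : ZMod N, c x * jacobiTheta₂ (x.val / N) (-1 / (N ^ 2 * τ)) := by
  have hN : (N : ℂ) ≠ 0 := NeZero.ne _
  have hτ₀ : τ ≠ 0 := by rintro rfl; simp at hτ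
  rw [tsum_int_eq_sum_zmod_tsum (summable_zmod_mul_exp c hτ) N, Finset.mul_sum, Finset.mul_sum]
  refine Finset.sum_congr rfl fun x _ ↦ ?_
  have hterm (k : ℤ) : c ((k * N + x.val : ℤ) : ZMod N) *
      cexp (π * I * ((k * N + x.val : ℤ) : ℂ) ^ 2 * τ) =
      c x * cexp (π * I * (k + x.val / N) ^ 2 * (N ^ 2 * τ)) := by
    congr 2
    · simp
    · push_cast
      field_simp
  have hroot : (-I * (N ^ 2 * τ)) ^ (1 / 2 : ℂ) = N * (-I * τ) ^ (1 / 2 : ℂ) := by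
    have harg : arg ((N : ℂ) ^ 2) = 0 := by rw [← Nat.cast_pow, natCast_arg]
    have hsq : ((N : ℂ) ^ 2) ^ (1 / 2 : ℂ) = N := by
      rw [one_div, sq_cpow_two_inv (by simpa using NeZero.pos N)]
    rw [mul_left_comm, mul_cpow_of_arg_add_arg_mem (by simp [harg, neg_pi_lt_arg, arg_le_pi]), hsq]
  simp_rw [hterm]
  rw [tsum_mul_left, ← cpow_half_mul_tsum_exp_add_sq _ (by positivity), hroot,
    mul_assoc (N : ℂ), mul_left_comm (c x), ← mul_assoc (1 / (N : ℂ)), one_div_mul_cancel hN]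
  ring

lemma tendsto_cpow_half_mul_tsum_zmod {N : ℕ} [NeZero N] (c : ZMod N → ℂ) {τ : ι → ℂ}
    (hτ : ∀ i, 0 < (τ i).im) (hlim : Tendsto (fun i ↦ (-1 / τ i).im) l atTop) :
    Tendsto (fun i ↦ (-I * τ i) ^ (1 / 2 : ℂ) * ∑' n : ℤ, c n * cexp (π * I * n ^ 2 * τ i)) l
      (𝓝 (1 / N * ∑ x, c x)) := by
  simp only [cpow_half_mul_tsum_zmod c (hτ _)]
  have him : Tendsto (fun i ↦ (-1 / (N ^ 2 * τ i)).im) l atTop := by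
    have hN : (0 : ℝ) < ((N : ℝ) ^ 2)⁻¹ := by have := NeZero.pos N; positivity
    refine (hlim.const_mul_atTop hN).congr fun i ↦ ?_
    rw [← im_ofReal_mul]
    congr 1
    push_cast
    ring
  refine (tendsto_finsetSum _ fun x _ ↦ ?_).const_mul _
  simpa using (tendsto_jacobiTheta₂_of_tendsto_im _ him).const_mul (c x)

lemma cpow_half_mul_jacobiTheta {τ : ℂ} (hτ : τ ≠ 0) :
    (-I * τ) ^ (1 / 2 : ℂ) * jacobiTheta τ = jacobiTheta (-1 / τ) := by
  rw [jacobiTheta_eq_jacobiTheta₂ (-1 / τ), ← cpow_half_mul_tsum_exp_add_sq 0 hτ]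
  simp [jacobiTheta]

lemma im_one_div_sub_one_div_ofReal_add_pos (x : ℝ) {τ : ℂ} (hτ : 0 < τ.im) :
    0 < (1 / x - 1 / (x + τ) : ℂ).im := by
  have hne : (x + τ : ℂ) ≠ 0 := ne_of_apply_ne im (by simpa using hτ.ne')
  simpa [inv_im, neg_div] using div_pos hτ (normSq_pos.mpr hne)

/- With `σ = 1/x - 1/(x + τ)`, the image `-1/(x + τ)` of `x + τ` under inversion is `-1/x + σ`: a
neighbourhood of the cusp `x` is carried to one of `-1/x`. -/
lemma cpow_half_mul_jacobiTheta_ofReal_add {x : ℝ} (hx : 0 < x) {τ : ℂ} (hτ : 0 < τ.im) :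
    (-I * τ) ^ (1 / 2 : ℂ) * jacobiTheta (x + τ) =
      (I * x) ^ (1 / 2 : ℂ) * ((-I * (1 / x - 1 / (x + τ))) ^ (1 / 2 : ℂ) *
        jacobiTheta (-1 / x + (1 / x - 1 / (x + τ)))) := by
  have hw : 0 < (x + τ).im := by simpa using hτ
  have hw₀ : (x + τ : ℂ) ≠ 0 := ne_of_apply_ne im hw.ne'
  have hx₀ : (x : ℂ) ≠ 0 := ofReal_ne_zero.mpr hx.ne'
  have hσ := im_one_div_sub_one_div_ofReal_add_pos x hτ
  have hprod : -I * (1 / x - 1 / (x + τ)) * (-I * (x + τ)) = -τ / x := by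
    field_simp
    simp
  have harg_neg_I_mul {w : ℂ} (hw : 0 < w.im) : |arg (-I * w)| < π / 2 :=
    abs_arg_lt_pi_div_two_iff.mpr (.inl (by simpa using hw))
  have harg_quot : arg (-τ / x) < 0 := arg_neg_iff.mpr <| by
    simpa using div_neg_of_neg_of_pos (neg_neg_of_pos hτ) hx
  have hroot : (-I * τ) ^ (1 / 2 : ℂ) = (I * x) ^ (1 / 2 : ℂ) *
      ((-I * (1 / x - 1 / (x + τ))) ^ (1 / 2 : ℂ) * (-I * (x + τ)) ^ (1 / 2 : ℂ)) := by
    rw [← mul_cpow_of_arg_add_arg_mem, hprod, ← mul_cpow_of_arg_add_arg_mem]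
    · congr 1
      field_simp
    · rw [arg_mul_real hx, arg_I]
      constructor <;> linarith [neg_pi_lt_arg (-τ / x)]
    · have h₁ := abs_lt.mp (harg_neg_I_mul hσ)
      have h₂ := abs_lt.mp (harg_neg_I_mul hw)
      constructor <;> linarith
  rw [hroot, mul_assoc, mul_assoc, cpow_half_mul_jacobiTheta hw₀]
  ring_nf

lemma jacobiTheta_rat_add_eq_tsum (a : ℤ) (N : ℕ) [NeZero N] (τ : ℂ) :
    jacobiTheta (2 * a / N + τ) =
      ∑' n : ℤ, ZMod.stdAddChar ((a : ZMod N) * (n : ZMod N) ^ 2) * cexp (π * I * n ^ 2 * τ) := by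
  rw [jacobiTheta]
  refine tsum_congr fun n ↦ ?_
  have hchar := ZMod.stdAddChar_coe (N := N) (a * n ^ 2)
  push_cast at hchar
  rw [hchar, ← Complex.exp_add]
  ring_nf

lemma tendsto_cpow_half_mul_jacobiTheta_rat_add (a : ℤ) (N : ℕ) [NeZero N] {τ : ι → ℂ}
    (hτ : ∀ i, 0 < (τ i).im) (hlim : Tendsto (fun i ↦ (-1 / τ i).im) l atTop) :
    Tendsto (fun i ↦ (-I * τ i) ^ (1 / 2 : ℂ) * jacobiTheta (2 * a / N + τ i)) l
      (𝓝 (1 / N * quadraticGaussSum (a : ZMod N))) := by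
  have h := tendsto_cpow_half_mul_tsum_zmod
    (fun x : ZMod N ↦ ZMod.stdAddChar ((a : ZMod N) * x ^ 2)) hτ hlim
  simpa only [jacobiTheta_rat_add_eq_tsum, quadraticGaussSum] using h

lemma im_neg_one_div_one_div_sub_one_div_ofReal_add {x : ℝ} (hx : x ≠ 0) {τ : ℂ}
    (hτ : τ.im ≠ 0) : (-1 / (1 / x - 1 / (x + τ)) : ℂ).im = x ^ 2 * (-1 / τ).im := by
  have hx_ne : (x : ℂ) ≠ 0 := ofReal_ne_zero.mpr hx
  have hτ_ne : τ ≠ 0 := ne_of_apply_ne im hτ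
  have hadd_ne : x + τ ≠ 0 := ne_of_apply_ne im (by simpa using hτ)
  have hinv : -1 / (1 / x - 1 / (x + τ)) = (-x : ℝ) + (x ^ 2 : ℝ) * (-1 / τ) := by
    rw [div_sub_div _ _ hx_ne hadd_ne, one_mul, mul_one, add_sub_cancel_left]
    push_cast
    field_simp
    ring
  rw [hinv, add_im, ofReal_im, zero_add, im_ofReal_mul]

lemma one_div_mul_quadraticGaussSum_eq_cpow_half_mul (a b : ℕ) [NeZero a] [NeZero b] :
    1 / b * quadraticGaussSum (a : ZMod b) =
      (I * (2 * a / b : ℝ)) ^ (1 / 2 : ℂ) *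
        (1 / (4 * a) * quadraticGaussSum (-b : ZMod (4 * a))) := by
  have ha : (0 : ℝ) < a := by exact_mod_cast NeZero.pos a
  have hb : (0 : ℝ) < b := by exact_mod_cast NeZero.pos b
  set x : ℝ := 2 * a / b with hx
  have hx₀ : 0 < x := by positivity
  have hx_cast : (2 * a / b : ℂ) = x := by simp [hx]
  have hx_inv : (2 * -b / (4 * a) : ℂ) = -1 / x := by rw [← hx_cast]; field_simp; ring
  let τ (n : ℕ) : ℂ := I / (n + 1 : ℝ)
  have hτ (n : ℕ) : 0 < (τ n).im := by
    simp only [τ, div_ofReal_im, I_im]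
    positivity
  have hτ_lim : Tendsto (fun n ↦ (-1 / τ n).im) atTop atTop := by
    have him (n : ℕ) : (-1 / τ n).im = n + 1 := by simp [τ, div_div_eq_mul_div]
    simpa only [him] using tendsto_atTop_add_const_right _ 1 tendsto_natCast_atTop_atTop
  have hσ_lim : Tendsto (fun n ↦ (-1 / (1 / x - 1 / (x + τ n)) : ℂ).im) atTop atTop := by
    simpa only [im_neg_one_div_one_div_sub_one_div_ofReal_add hx₀.ne' (hτ _).ne'] using
      hτ_lim.const_mul_atTop (by positivity)
  have hleft := tendsto_cpow_half_mul_jacobiTheta_rat_add a b hτ hτ_lim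
  have hright := tendsto_cpow_half_mul_jacobiTheta_rat_add (-b) (4 * a)
    (fun n ↦ im_one_div_sub_one_div_ofReal_add_pos x (hτ n)) hσ_lim
  push_cast at hleft hright
  refine tendsto_nhds_unique hleft ((hright.const_mul ((I * x) ^ (1 / 2 : ℂ))).congr fun n ↦ ?_)
  rw [hx_cast, hx_inv, cpow_half_mul_jacobiTheta_ofReal_add hx₀ (hτ n)]

theorem quadraticGaussSum_reciprocity (a b : ℕ) [NeZero a] [NeZero b] :
    quadraticGaussSum (a : ZMod b) =
      (1 + I) / 4 * √(b / a) * quadraticGaussSum (-b : ZMod (4 * a)) := by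
  have ha : (0 : ℝ) < a := by exact_mod_cast NeZero.pos a
  have hb : (0 : ℝ) < b := by exact_mod_cast NeZero.pos b
  have hsqrt : √(2 * a / b / 2) * b = √(b / a) * a := by
    rw [show 2 * (a : ℝ) / b / 2 = a / b by ring, Real.sqrt_div ha.le, Real.sqrt_div hb.le]
    field_simp
    rw [Real.sq_sqrt hb.le, Real.sq_sqrt ha.le, mul_comm]
  have hsqrt_cast : (√(2 * a / b / 2) * b : ℂ) = √(b / a) * a := by exact_mod_cast hsqrt
  have h := one_div_mul_quadraticGaussSum_eq_cpow_half_mul a b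
  rw [I_mul_ofReal_cpow_half (by positivity)] at h
  have ha₀ : (a : ℂ) ≠ 0 := NeZero.ne _
  have hb₀ : (b : ℂ) ≠ 0 := NeZero.ne _
  calc quadraticGaussSum (a : ZMod b)
      = b * (1 / b * quadraticGaussSum (a : ZMod b)) := by field_simp
    _ = (1 + I) / (4 * a) * (√(2 * a / b / 2) * b) * quadraticGaussSum (-b : ZMod (4 * a)) := by
      rw [h]
      ring
    _ = _ := by
      rw [hsqrt_cast]
      field_simp

end Reciprocity

lemma quadraticGaussSum_zmod_four (a : ZMod 4) :
    quadraticGaussSum a = 2 * (1 + ZMod.stdAddChar a) := by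
  have huniv : (Finset.univ : Finset (ZMod 4)) = {0, 1, 2, 3} := rfl
  have htwo : (2 : ZMod 4) ^ 2 = 0 := rfl
  have hthree : (3 : ZMod 4) ^ 2 = 1 := rfl
  rw [quadraticGaussSum, huniv, Finset.sum_insert (by decide), Finset.sum_insert (by decide),
    Finset.sum_pair (by decide), htwo, hthree]
  simp only [ne_eq, OfNat.ofNat_ne_zero, not_false_eq_true, zero_pow, one_pow, mul_zero, mul_one,
    AddChar.map_zero_eq_one]
  ring

lemma stdAddChar_zmod_four_neg_natCast (N : ℕ) :
    ZMod.stdAddChar (-N : ZMod 4) = (-I) ^ N := by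
  have hone : ZMod.stdAddChar (-1 : ZMod 4) = -I := by
    have h := ZMod.stdAddChar_coe (N := 4) (-1)
    push_cast at h
    rw [h, ← exp_neg_pi_div_two_mul_I]
    congr 1
    ring
  rw [← hone, ← AddChar.map_nsmul_eq_pow]
  simp

theorem quadraticGaussSum_one (N : ℕ) [NeZero N] :
    quadraticGaussSum (1 : ZMod N) = (1 + I) * (1 + (-I) ^ N) / 2 * √N := by
  have h := quadraticGaussSum_reciprocity 1 N
  rw [Nat.cast_one] at h
  rw [h, quadraticGaussSum_zmod_four, stdAddChar_zmod_four_neg_natCast]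
  simp only [Nat.cast_one, div_one]
  ring

lemma quadraticGaussSum_one_of_four_dvd {N : ℕ} [NeZero N] (hN : 4 ∣ N) :
    quadraticGaussSum (1 : ZMod N) = (1 + I) * √N := by
  obtain ⟨k, hk⟩ := hN
  have hpow : (-I) ^ N = 1 := by rw [hk, pow_mul, neg_pow, I_pow_four]; norm_num
  rw [quadraticGaussSum_one, hpow]
  ring

lemma quadraticGaussSum_one_of_odd {N : ℕ} [NeZero N] (hN : Odd N) :
    quadraticGaussSum (1 : ZMod N) = (if N % 4 = 1 then 1 else I) * √N := by
  have hpow : (-I) ^ N = (-I) ^ (N % 4) := by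
    conv_lhs => rw [← Nat.div_add_mod N 4, pow_add, pow_mul, neg_pow, I_pow_four]
    norm_num
  rw [quadraticGaussSum_one, hpow]
  obtain hmod | hmod := Nat.odd_mod_four_iff.mp (Nat.odd_iff.mp hN)
  · rw [hmod, if_pos rfl]
    linear_combination (-√N / 2 : ℂ) * I_sq
  · rw [hmod, if_neg (by decide)]
    linear_combination (-√N / 2 * (I + I ^ 2 - 1) : ℂ) * I_sq

lemma stdAddChar_natCast_mul {N m k : ℕ} [NeZero N] [NeZero m] (h : m * k = N) (z : ZMod N) :
    ZMod.stdAddChar ((k : ZMod N) * z) =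
      ZMod.stdAddChar (ZMod.castHom (Dvd.intro k h) (ZMod m) z) := by
  obtain ⟨j, rfl⟩ := ZMod.intCast_surjective z
  have hN : (m * k : ℂ) = N := by exact_mod_cast h
  have hk : (k : ℂ) ≠ 0 := right_ne_zero_of_mul (hN ▸ NeZero.ne (N : ℂ))
  have hm : (m : ℂ) ≠ 0 := NeZero.ne _
  have hchar := ZMod.stdAddChar_coe (N := N) (k * j)
  push_cast at hchar
  rw [hchar, map_intCast, ZMod.stdAddChar_coe, ← hN]
  congr 1
  field_simp

theorem quadraticGaussSum_mul_of_coprime {m n : ℕ} [NeZero m] [NeZero n] (hmn : m.Coprime n)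
    (a : ℤ) :
    quadraticGaussSum (a : ZMod (m * n)) =
      quadraticGaussSum (a * n : ZMod m) * quadraticGaussSum (a * m : ZMod n) := by
  -- Substitute `(m + n) z` for the summation variable and use `(m + n)² ≡ n² + m²` modulo `m n`.
  obtain ⟨u, hu⟩ : IsUnit ((m + n : ℕ) : ZMod (m * n)) := by
    rw [ZMod.isUnit_iff_coprime]
    simpa [Nat.coprime_mul_iff_right] using ⟨hmn.symm, hmn⟩
  have hmn₀ : (m * n : ZMod (m * n)) = 0 := by exact_mod_cast ZMod.natCast_self (m * n)
  have hterm (z : ZMod (m * n)) :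
      ZMod.stdAddChar ((a : ZMod (m * n)) * ((u : ZMod (m * n)) * z) ^ 2) =
      ZMod.stdAddChar ((a * n : ZMod m) * (ZMod.chineseRemainder hmn z).1 ^ 2) *
        ZMod.stdAddChar ((a * m : ZMod n) * (ZMod.chineseRemainder hmn z).2 ^ 2) := by
    have hsplit : (a * (u * z) ^ 2 : ZMod (m * n)) = n * (a * n * z ^ 2) + m * (a * m * z ^ 2) := by
      rw [hu]
      push_cast
      linear_combination (2 * a * z ^ 2) * hmn₀
    rw [hsplit, AddChar.map_add_eq_mul, stdAddChar_natCast_mul (m := m) rfl,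
      stdAddChar_natCast_mul (m := n) (mul_comm n m)]
    obtain ⟨k, rfl⟩ := ZMod.intCast_surjective z
    simp only [map_mul, map_pow, map_intCast, map_natCast, Prod.fst_intCast, Prod.snd_intCast]
  simp only [quadraticGaussSum]
  rw [← u.mulLeft_bijective.sum_comp, Finset.sum_mul_sum, ← Fintype.sum_prod_type',
    ← (ZMod.chineseRemainder hmn).toEquiv.sum_comp]
  exact Finset.sum_congr rfl fun z _ ↦ hterm z

section FiniteField

variable {F R : Type*} [Field F] [Fintype F] [DecidableEq F] [CommRing R] [IsDomain R]

open Finset in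
theorem sum_addChar_sq_eq_gaussSum (hF : ringChar F ≠ 2) {ψ : AddChar F R} (hψ : ψ ≠ 1) :
    ∑ x, ψ (x ^ 2) = gaussSum ((quadraticChar F).ringHomComp (Int.castRingHom R)) ψ := by
  have hcard (y : F) : (#{x : F | x ^ 2 = y} : R) = quadraticChar F y + 1 := by
    have h := quadraticChar_card_sqrts hF y
    rw [Set.toFinset_ofPred] at h
    exact_mod_cast congrArg (Int.cast : ℤ → R) h
  calc ∑ x, ψ (x ^ 2) = ∑ y, #{x : F | x ^ 2 = y} • ψ y := by
        simp only [← sum_fiberwise' univ (· ^ 2) ψ, sum_const]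
    _ = ∑ y, quadraticChar F y * ψ y + ∑ y, ψ y := by
        simp only [nsmul_eq_mul, hcard, add_mul, one_mul, sum_add_distrib]
    _ = _ := by
        rw [AddChar.sum_eq_zero_of_ne_one hψ, add_zero]
        rfl

theorem sum_addChar_mul_sq (hF : ringChar F ≠ 2) {ψ : AddChar F R} (hψ : ψ ≠ 1) {a : F}
    (ha : a ≠ 0) : ∑ x, ψ (a * x ^ 2) = quadraticChar F a * ∑ x, ψ (x ^ 2) := by
  have hχ := (quadraticChar_isQuadratic F).comp (Int.castRingHom R)
  calc ∑ x, ψ (a * x ^ 2) = gaussSum _ (ψ.mulShift a) :=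
        sum_addChar_sq_eq_gaussSum hF (AddChar.IsPrimitive.of_ne_one hψ ha)
    _ = _ := by
      rw [sum_addChar_sq_eq_gaussSum hF hψ, ← Units.val_mk0 ha, gaussSum_mulShift_eq, hχ.inv]
      rfl

end FiniteField

theorem quadraticGaussSum_eq_legendreSym_mul {ℓ : ℕ} [Fact ℓ.Prime] (hℓ : ℓ ≠ 2) {a : ℤ}
    (ha : (a : ZMod ℓ) ≠ 0) :
    quadraticGaussSum (a : ZMod ℓ) = legendreSym ℓ a * quadraticGaussSum (1 : ZMod ℓ) := by
  have hchar : ringChar (ZMod ℓ) ≠ 2 := by rwa [ZMod.ringChar_zmod_n]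
  have hψ : ZMod.stdAddChar (N := ℓ) ≠ 1 := by
    simpa using ZMod.isPrimitive_stdAddChar ℓ one_ne_zero
  simpa [quadraticGaussSum, legendreSym] using sum_addChar_mul_sq hchar hψ ha

lemma odd_of_coprime_of_even {m n : ℕ} (h : m.Coprime n) (hn : Even n) : Odd m :=
  Nat.coprime_two_right.mp (h.coprime_dvd_right hn.two_dvd)

theorem quadraticGaussSum_prime_of_four_dvd {q ℓ : ℕ} [NeZero q] [Fact ℓ.Prime] (h4 : 4 ∣ q)
    (hco : ℓ.Coprime q) :
    quadraticGaussSum (ℓ : ZMod q) =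
      (1 + I) * (if ℓ % 4 = 1 then (1 : ℂ) else I)⁻¹ * (jacobiSym q ℓ : ℂ) * √q := by
  have hprime : ℓ.Prime := Fact.out
  have hodd : Odd ℓ := odd_of_coprime_of_even hco (by grind)
  have hqℓ : ((q : ℤ) : ZMod ℓ) ≠ 0 := by
    rw [Int.cast_natCast, Ne, ZMod.natCast_eq_zero_iff]
    exact hprime.coprime_iff_not_dvd.mp hco
  have hlegendre := quadraticGaussSum_eq_legendreSym_mul (by rintro rfl; contradiction) hqℓ
  have hlegendre_sq : (legendreSym ℓ q : ℂ) ^ 2 = 1 := by exact_mod_cast legendreSym.sq_one ℓ hqℓ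
  rw [← jacobiSym.legendreSym.to_jacobiSym]
  set ε : ℂ := if ℓ % 4 = 1 then 1 else I with hε
  have hprod : (1 + I) * (√q * √ℓ) =
      quadraticGaussSum (ℓ : ZMod q) * (legendreSym ℓ q * (ε * √ℓ)) := by
    have h := quadraticGaussSum_mul_of_coprime hco.symm 1
    push_cast at h hlegendre
    rwa [one_mul, one_mul, hlegendre, quadraticGaussSum_one_of_four_dvd (h4.mul_right ℓ),
      quadraticGaussSum_one_of_odd hodd, Nat.cast_mul, Real.sqrt_mul q.cast_nonneg,
      ofReal_mul] at h
  have hε_ne : ε ≠ 0 := by rw [hε]; split_ifs <;> simp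
  have hℓ_ne : (√ℓ : ℂ) ≠ 0 := by simpa using hprime.ne_zero
  field_simp
  refine mul_right_cancel₀ hℓ_ne ?_
  linear_combination (-legendreSym ℓ q : ℂ) * hprod -
    quadraticGaussSum (ℓ : ZMod q) * ε * √ℓ * hlegendre_sq

/-- Gauss sum evaluation for `q ≡ 0 mod 4`. -/
theorem gauss_sum_q_cong_zero_mod_four (p q : ℕ) (hp : 0 < p) (hq : 0 < q)
    (hco : Nat.Coprime p q) (h4 : q % 4 = 0) :
    ∑ h ∈ Finset.range q, Complex.exp (2 * π * I * p * h ^ 2 / q)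
      = (1 + I) * (if p % 4 = 1 then (1 : ℂ) else I)⁻¹ * (jacobiSym q p : ℂ)
        * (Real.sqrt q : ℂ) := by
  have : NeZero q := ⟨hq.ne'⟩
  have h4q : 4 ∣ q := Nat.dvd_of_mod_eq_zero h4
  have hq_even : Even q := by grind
  have hco_four_mul : p.Coprime (4 * q) := (hco.coprime_dvd_right h4q).mul_right hco
  obtain ⟨ℓ, -, hℓ, hmod⟩ := Nat.forall_exists_prime_gt_and_modEq 0 (by positivity) hco_four_mul
  have : Fact ℓ.Prime := ⟨hℓ⟩
  have hmod_q : (ℓ : ZMod q) = p := (ZMod.natCast_eq_natCast_iff _ _ _).mpr hmod.of_mul_left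
  have hmod_four : ℓ % 4 = p % 4 := hmod.of_mul_right q
  have hℓq : ℓ.Coprime q := hmod.of_mul_left.gcd_eq.trans hco
  have hjacobi : jacobiSym q ℓ = jacobiSym q p := by
    rw [jacobiSym.mod_right' q (odd_of_coprime_of_even hco hq_even),
      jacobiSym.mod_right' q (odd_of_coprime_of_even hℓq hq_even), hmod]
  rw [sum_range_exp_eq_quadraticGaussSum, ← hmod_q, quadraticGaussSum_prime_of_four_dvd h4q hℓq,
    hmod_four, hjacobi]
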